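/- arXiv:1108.0531 — 3 statements merged into one kernel-verified Lean document; each statement's English description precedes it below -/
import Mathlib

section
/- (Dicke states are M-states.) Let n ≥ 2 and 1 ≤ k ≤ n−1. On ℂ^{ℤ₂ⁿ}, let α = e^{2πi/n}, let T_k be the diagonal unitary with T_k e_x = α^{|x|−k} e_x where |x| is the Hamming weight of x, and for 1 ≤ i ≤ n−1 let S_i be the permutation matrix that swaps the i-th and (i+1)-st bits of the index: S_i e_x = e_{τ_i(x)} with τ_i exchanging coordinates i and i+1. Then a vector v ∈ ℂ^{ℤ₂ⁿ} satisfies T_k v = v and S_i v = v for all i = 1, …, n−1 if and only if v is a scalar multiple of the Dicke state D^k = ∑_{x : |x| = k} e_x. -/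
open Matrix

/-- Hamming weight of `x ∈ ℤ₂ⁿ`: the number of coordinates equal to `1`. -/
def hammingWt {n : ℕ} (x : Fin n → ZMod 2) : ℕ :=
  (Finset.univ.filter fun i => x i = 1).card

/-- The diagonal unitary `T_k` with `T_k e_x = α^{|x|−k} e_x`, `α = e^{2πi/n}`. -/
noncomputable def Tdiag (n k : ℕ) :
    Matrix (Fin n → ZMod 2) (Fin n → ZMod 2) ℂ :=
  Matrix.diagonal fun x =>
    Complex.exp (2 * Real.pi * Complex.I / n) ^ ((hammingWt x : ℤ) - (k : ℤ))

/-- The permutation matrix `S_i` swapping the `i`-th and `(i+1)`-st bits of the index. -/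
def Sswap (n : ℕ) (i : ℕ) (hi : i + 1 < n) :
    Matrix (Fin n → ZMod 2) (Fin n → ZMod 2) ℂ :=
  Matrix.of fun y z =>
    if y = z ∘ (Equiv.swap (⟨i, Nat.lt_of_succ_lt hi⟩ : Fin n) ⟨i + 1, hi⟩) then 1 else 0

/-!
The adjacent transpositions generate the symmetric group, whose orbits on `ℤ₂ⁿ` are the level sets
of the Hamming weight; so `v` is fixed by every `S_i` exactly when `v x` depends only on `|x|`.
As `α` is a primitive `n`-th root of unity, `v` is fixed by `T_k` exactly when it is supported on
the `x` with `|x| ≡ k` modulo `n`, and for `0 < k < n` the bound `|x| ≤ n` turns this congruence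
into `|x| = k`.
-/

section AdjacentSwaps

variable {n : ℕ}

/-- The adjacent transposition `(i i+1)` of `Fin n`, spelled as in `Sswap`: the permutation `τ_i`
of the coordinates. -/
abbrev adjacentSwap (i : ℕ) (hi : i + 1 < n) : Equiv.Perm (Fin n) :=
  Equiv.swap ⟨i, Nat.lt_of_succ_lt hi⟩ ⟨i + 1, hi⟩

theorem closure_adjacentSwap :
    Submonoid.closure {σ : Equiv.Perm (Fin n) | ∃ i hi, σ = adjacentSwap i hi} = ⊤ := by
  cases n with
  | zero => exact Subsingleton.elim _ _
  | succ m =>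
    rw [eq_top_iff, ← Equiv.Perm.mclosure_swap_castSucc_succ]
    apply Submonoid.closure_mono
    rintro _ ⟨i, rfl⟩
    exact ⟨i, Nat.succ_lt_succ i.isLt, rfl⟩

theorem forall_comp_perm_iff_forall_comp_adjacentSwap {α β : Type*} {f : (Fin n → α) → β} :
    (∀ (σ : Equiv.Perm (Fin n)) x, f (x ∘ σ) = f x) ↔
      ∀ i hi x, f (x ∘ adjacentSwap i hi) = f x := by
  refine ⟨fun h i hi => h (adjacentSwap i hi), fun h σ => ?_⟩
  have hσ : σ ∈ Submonoid.closure {σ | ∃ i hi, σ = adjacentSwap i hi} :=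
    closure_adjacentSwap ▸ Submonoid.mem_top σ
  induction hσ using Submonoid.closure_induction with
  | mem _ hs => obtain ⟨i, hi, rfl⟩ := hs; exact h i hi
  | one => exact fun _ => rfl
  | mul σ τ _ _ hσ hτ => exact fun x => (hτ (x ∘ σ)).trans (hσ x)

end AdjacentSwaps

section HammingWeight

variable {n : ℕ}

theorem hammingWt_le (x : Fin n → ZMod 2) : hammingWt x ≤ n :=
  (Finset.card_le_univ _).trans_eq (Fintype.card_fin n)

theorem hammingWt_comp_perm (x : Fin n → ZMod 2) (σ : Equiv.Perm (Fin n)) :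
    hammingWt (x ∘ σ) = hammingWt x :=
  Finset.card_equiv σ (by simp)

theorem hammingWt_eq_iff_exists_perm {x y : Fin n → ZMod 2} :
    hammingWt x = hammingWt y ↔ ∃ σ : Equiv.Perm (Fin n), x = y ∘ σ := by
  refine ⟨fun h => ?_, fun ⟨σ, hσ⟩ => hσ ▸ hammingWt_comp_perm y σ⟩
  have hcard : Fintype.card {i // x i = 1} = Fintype.card {i // y i = 1} := by
    simpa only [Fintype.card_subtype, hammingWt] using h
  let e := Fintype.equivOfCardEq hcard
  have eq_zero_of_ne_one : ∀ a : ZMod 2, a ≠ 1 → a = 0 := by decide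
  refine ⟨e.extendSubtype, funext fun i => ?_⟩
  by_cases hi : x i = 1
  · exact hi.trans (e.extendSubtype_mem i hi).symm
  · exact (eq_zero_of_ne_one _ hi).trans
      (eq_zero_of_ne_one _ (e.extendSubtype_not_mem i hi)).symm

theorem factorsThrough_hammingWt_iff {β : Type*} {f : (Fin n → ZMod 2) → β} :
    f.FactorsThrough hammingWt ↔ ∀ (σ : Equiv.Perm (Fin n)) x, f (x ∘ σ) = f x := by
  refine ⟨fun h σ x => h (hammingWt_comp_perm x σ), fun h x y hxy => ?_⟩
  obtain ⟨σ, rfl⟩ := hammingWt_eq_iff_exists_perm.1 hxy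
  exact h σ y

theorem hammingWt_modEq_iff_eq {k : ℕ} (hk : 0 < k) (hkn : k < n) {x : Fin n → ZMod 2} :
    hammingWt x ≡ k [MOD n] ↔ hammingWt x = k := by
  rw [Nat.ModEq, Nat.mod_eq_of_lt hkn]
  obtain hlt | heq := (hammingWt_le x).lt_or_eq
  · rw [Nat.mod_eq_of_lt hlt]
  · rw [heq, Nat.mod_self]
    exact iff_of_false hk.ne hkn.ne'

end HammingWeight

section FixedVectors

variable {n : ℕ}

theorem Sswap_mulVec_apply (i : ℕ) (hi : i + 1 < n) (v : (Fin n → ZMod 2) → ℂ)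
    (x : Fin n → ZMod 2) : (Sswap n i hi *ᵥ v) x = v (x ∘ adjacentSwap i hi) := by
  have eq_comp_iff (z : Fin n → ZMod 2) :
      x = z ∘ adjacentSwap i hi ↔ x ∘ adjacentSwap i hi = z := by
    rw [← Equiv.eq_comp_symm, Equiv.symm_swap]
  simp [Sswap, mulVec, dotProduct, eq_comp_iff]

variable {v : (Fin n → ZMod 2) → ℂ}

theorem forall_Sswap_mulVec_eq_self_iff :
    (∀ i hi, Sswap n i hi *ᵥ v = v) ↔ v.FactorsThrough hammingWt := by
  simp only [factorsThrough_hammingWt_iff, forall_comp_perm_iff_forall_comp_adjacentSwap,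
    funext_iff, Sswap_mulVec_apply]

theorem Tdiag_mulVec_eq_self_iff (hn : n ≠ 0) {k : ℕ} :
    Tdiag n k *ᵥ v = v ↔ ∀ x, v x ≠ 0 → hammingWt x ≡ k [MOD n] := by
  refine funext_iff.trans (forall_congr' fun x => ?_)
  rw [Tdiag, mulVec_diagonal, mul_left_eq_self₀,
    (Complex.isPrimitiveRoot_exp n hn).zpow_eq_one_iff_dvd, ← Nat.modEq_iff_dvd,
    Nat.ModEq.comm, or_iff_not_imp_right]

end FixedVectors

theorem exists_eq_smul_ite_iff {α β R : Type*} [DecidableEq β] [MulZeroOneClass R]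
    {w : α → β} {b : β} {f : α → R} :
    (∃ c : R, f = c • fun x => if w x = b then (1 : R) else 0) ↔
      (∀ x, f x ≠ 0 → w x = b) ∧ f.FactorsThrough w := by
  constructor
  · rintro ⟨c, rfl⟩
    exact ⟨fun x => by simp +contextual, fun x y hxy => by simp [hxy]⟩
  · rintro ⟨hsupp, hconst⟩
    have eq_zero_of_ne {x : α} : w x ≠ b → f x = 0 := not_imp_comm.1 (hsupp x)
    by_cases hb : ∃ x₀, w x₀ = b
    · obtain ⟨x₀, hx₀⟩ := hb
      refine ⟨f x₀, funext fun x => ?_⟩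
      by_cases hx : w x = b
      · simp [hx, hconst (hx.trans hx₀.symm)]
      · simp [hx, eq_zero_of_ne hx]
    · exact ⟨0, funext fun x => by simp [eq_zero_of_ne fun hx => hb ⟨x, hx⟩]⟩

/-- **Dicke states are M-states.** For `n ≥ 2` and `1 ≤ k ≤ n−1`, a vector
`v` satisfies `T_k v = v` and `S_i v = v` for all `i` iff `v` is a scalar multiple of the
Dicke state `D^k = ∑_{|x| = k} e_x`. -/
theorem dicke_is_Mstate (n k : ℕ) (hn : 2 ≤ n) (hk1 : 1 ≤ k) (hk2 : k ≤ n - 1)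
    (v : (Fin n → ZMod 2) → ℂ) :
    ((Tdiag n k).mulVec v = v ∧
      ∀ (i : ℕ) (hi : i + 1 < n), (Sswap n i hi).mulVec v = v) ↔
    ∃ c : ℂ, v = c • fun x => if hammingWt x = k then (1 : ℂ) else 0 := by
  have hkn : k < n := by omega
  rw [Tdiag_mulVec_eq_self_iff (by omega), forall_Sswap_mulVec_eq_self_iff,
    exists_eq_smul_ite_iff]
  simp only [hammingWt_modEq_iff_eq hk1 hkn]
end

section
/- (Coset states of finite abelian groups are M-states.) Let G be a finite abelian (additive) group, H ≤ G a subgroup, and x₀ ∈ G. On the Hilbert space ℂ^G with basis {e_g : g ∈ G}, define for h ∈ G the translation operator X(h) by X(h) e_g = e_{g+h}, and for an additive character χ : G → ℂˣ the diagonal operator Z(χ) by Z(χ) e_g = χ(g) e_g. Then a vector v ∈ ℂ^G satisfies X(h) v = v for all h ∈ H and χ(x₀)⁻¹ · Z(χ) v = v for every character χ of G that is trivial on H, if and only if v is a scalar multiple of the coset state |H + x₀⟩ = ∑_{h∈H} e_{x₀+h}. -/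
open Matrix
open scoped translate

/-!
Invariance under the translations `X(h)`, `h ∈ H`, says that `v` is constant on the cosets of `H`.
The phase condition for `χ` says that `v` vanishes wherever `χ (g - x₀) ≠ 1`; since the characters
trivial on `H` separate the points outside `H` from `0`, imposing it for all of them confines the
support of `v` to `H + x₀`. Together, `v` is constant on `H + x₀` and zero elsewhere.

Enough characters exist because `ℚ/ℤ` is a cogenerator of abelian groups and embeds into `ℂˣ`.
-/

section Characters

theorem exists_injective_addChar_ratAddCircle :
    ∃ ψ : AddChar (AddCircle (1 : ℚ)) ℂ, Function.Injective ψ := by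
  let ratCast : ℚ →+ ℝ := Rat.castHom ℝ
  have mem_zmultiples_iff (q : ℚ) :
      ratCast q ∈ AddSubgroup.zmultiples (1 : ℝ) ↔ q ∈ AddSubgroup.zmultiples (1 : ℚ) := by
    simp only [AddSubgroup.mem_zmultiples_iff, ratCast]
    exact exists_congr fun n ↦ by simp [← Rat.cast_inj (α := ℝ)]
  let toReal : AddCircle (1 : ℚ) →+ AddCircle (1 : ℝ) :=
    QuotientAddGroup.map _ _ ratCast fun q ↦ (mem_zmultiples_iff q).2
  have toReal_injective : Function.Injective toReal := by
    refine (injective_iff_map_eq_zero toReal).2 fun t ht ↦ ?_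
    induction t using QuotientAddGroup.induction_on with
    | H q =>
      exact (QuotientAddGroup.eq_zero_iff q).2 <|
        (mem_zmultiples_iff q).1 <| (QuotientAddGroup.eq_zero_iff (ratCast q)).1 ht
  exact ⟨(Circle.coeHom.compAddChar AddCircle.toCircle_addChar).compAddMonoidHom toReal,
    Circle.coe_injective.comp <|
      (AddCircle.injective_toCircle one_ne_zero).comp toReal_injective⟩

variable {G : Type*} [AddCommGroup G]

theorem exists_addChar_apply_ne_one {a : G} (ha : a ≠ 0) : ∃ ψ : AddChar G ℂ, ψ a ≠ 1 := by
  obtain ⟨ψ, hψ⟩ := exists_injective_addChar_ratAddCircle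
  obtain ⟨φ, hφ⟩ := CharacterModule.exists_character_apply_ne_zero_of_ne_zero ha
  exact ⟨ψ.compAddMonoidHom φ, fun h ↦ hφ <| hψ <| h.trans ψ.map_zero_eq_one.symm⟩

theorem exists_addChar_eq_one_on_apply_ne_one {H : AddSubgroup G} {x : G} (hx : x ∉ H) :
    ∃ χ : AddChar G ℂ, (∀ h ∈ H, χ h = 1) ∧ χ x ≠ 1 := by
  obtain ⟨ψ, hψ⟩ := exists_addChar_apply_ne_one (mt (QuotientAddGroup.eq_zero_iff x).1 hx)
  refine ⟨ψ.compAddMonoidHom (QuotientAddGroup.mk' H), fun h hh ↦ ?_, hψ⟩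
  simp [(QuotientAddGroup.eq_zero_iff h).2 hh]

end Characters

section PhaseCondition

variable {G : Type*} [AddCommGroup G]

theorem inv_smul_addChar_mul_eq_self_iff {K : Type*} [GroupWithZero K] (χ : AddChar G K)
    (x₀ : G) (v : G → K) : (χ x₀)⁻¹ • (⇑χ * v) = v ↔ ∀ g, χ (g - x₀) ≠ 1 → v g = 0 := by
  have phase_apply (g : G) : ((χ x₀)⁻¹ • (⇑χ * v)) g = χ (g - x₀) * v g := by
    simp only [Pi.smul_apply, Pi.mul_apply, smul_eq_mul, sub_eq_neg_add, AddChar.map_add_eq_mul,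
      AddChar.map_neg_eq_inv, mul_assoc]
  simp only [funext_iff, phase_apply, mul_left_eq_self₀, or_iff_not_imp_left, ne_eq]

theorem forall_inv_smul_addChar_mul_eq_self_iff (H : AddSubgroup G) (x₀ : G) (v : G → ℂ) :
    (∀ χ : AddChar G ℂ, (∀ h ∈ H, χ h = 1) → (χ x₀)⁻¹ • (⇑χ * v) = v) ↔
      ∀ g, g - x₀ ∉ H → v g = 0 := by
  simp only [inv_smul_addChar_mul_eq_self_iff]
  constructor
  · intro hv g hg
    obtain ⟨χ, hχH, hχ⟩ := exists_addChar_eq_one_on_apply_ne_one hg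
    exact hv χ hχH g hχ
  · intro hv χ hχH g hχ
    exact hv g (mt (hχH _) hχ)

end PhaseCondition

section CosetState

variable {G : Type*} [AddCommGroup G]

/-- The coset state `|H + x₀⟩ = ∑_{h ∈ H} e_{x₀ + h}`, encoded as the indicator function of the
coset `H + x₀` so that it also makes sense when `H` is infinite. -/
def cosetState (K : Type*) [Zero K] [One K] (H : AddSubgroup G) [DecidablePred (· ∈ H)]
    (x₀ : G) : G → K :=
  fun g ↦ if g - x₀ ∈ H then 1 else 0

variable {K : Type*}

theorem translate_cosetState [Zero K] [One K] {H : AddSubgroup G} [DecidablePred (· ∈ H)]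
    {h : G} (hh : h ∈ H) (x₀ : G) : τ h (cosetState K H x₀) = cosetState K H x₀ := by
  ext g
  have mem_iff : g - h - x₀ ∈ H ↔ g - x₀ ∈ H := by
    rw [sub_right_comm, sub_eq_add_neg, H.add_mem_cancel_right (H.neg_mem hh)]
  simp only [translate_apply, cosetState, mem_iff]

theorem exists_eq_smul_cosetState_iff [MulZeroOneClass K] (H : AddSubgroup G)
    [DecidablePred (· ∈ H)] (x₀ : G) (v : G → K) :
    (∃ c : K, v = c • cosetState K H x₀) ↔
      (∀ h ∈ H, τ h v = v) ∧ ∀ g, g - x₀ ∉ H → v g = 0 := by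
  constructor
  · rintro ⟨c, rfl⟩
    refine ⟨fun h hh ↦ ?_, fun g hg ↦ ?_⟩
    · rw [translate_smul_right, translate_cosetState hh]
    · simp [cosetState, hg]
  · rintro ⟨translate_eq, eq_zero⟩
    refine ⟨v x₀, funext fun g ↦ ?_⟩
    by_cases hg : g - x₀ ∈ H
    · have v_eq : v x₀ = v g := by simpa using congrFun (translate_eq _ hg) g
      simp [cosetState, hg, v_eq]
    · simp [cosetState, hg, eq_zero g hg]

end CosetState

section Matrices

variable {G R : Type*} [Fintype G] [DecidableEq G]

theorem of_ite_eq_add_mulVec [AddCommGroup G] [NonAssocSemiring R] (h : G) (v : G → R) :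
    (Matrix.of fun g g' : G ↦ if g = g' + h then (1 : R) else 0).mulVec v = τ h v := by
  ext g
  simp [mulVec, dotProduct, ← sub_eq_iff_eq_add]

theorem diagonal_mulVec_eq_mul [NonUnitalNonAssocSemiring R] (d v : G → R) :
    (diagonal d).mulVec v = d * v :=
  funext (mulVec_diagonal d v)

end Matrices

theorem coset_state_is_Mstate_general {G : Type*} [AddCommGroup G] (H : AddSubgroup G)
    [DecidablePred (· ∈ H)] (x₀ : G) (v : G → ℂ) :
    ((∀ h ∈ H, τ h v = v) ∧
      ∀ χ : AddChar G ℂ, (∀ h ∈ H, χ h = 1) → (χ x₀)⁻¹ • (⇑χ * v) = v) ↔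
    ∃ c : ℂ, v = c • cosetState ℂ H x₀ := by
  rw [forall_inv_smul_addChar_mul_eq_self_iff, exists_eq_smul_cosetState_iff]

/-- **coset states of finite abelian groups are M-states.** Let `G` be a
finite abelian group, `H ≤ G` and `x₀ ∈ G`. A vector `v ∈ ℂ^G` satisfies `X(h) v = v` for
all `h ∈ H` and `χ(x₀)⁻¹ Z(χ) v = v` for every character `χ` of `G` trivial on `H`, iff
`v` is a scalar multiple of the coset state `|H + x₀⟩ = ∑_{h ∈ H} e_{x₀+h}`. -/
theorem coset_state_is_Mstate (G : Type*) [AddCommGroup G] [Fintype G] [DecidableEq G]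
    (H : AddSubgroup G) [DecidablePred (· ∈ H)] (x₀ : G) (v : G → ℂ) :
    ((∀ h ∈ H,
        (Matrix.of fun g g' : G => if g = g' + h then (1 : ℂ) else 0).mulVec v = v) ∧
      (∀ χ : AddChar G ℂ, (∀ h ∈ H, χ h = 1) →
        (χ x₀)⁻¹ • (Matrix.diagonal fun g : G => χ g).mulVec v = v)) ↔
    ∃ c : ℂ, v = c • fun g : G => if g - x₀ ∈ H then (1 : ℂ) else 0 := by
  simp only [of_ite_eq_add_mulVec, diagonal_mulVec_eq_mul]
  exact coset_state_is_Mstate_general H x₀ v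
end

section
/- (Two-site AKLT stabilizer.) On ℂ³ ⊗ ℂ³ with orthonormal basis {|a b⟩ : a, b ∈ {0,1,2}}, let U be the monomial unitary operator defined by U|01⟩ = −|10⟩, U|10⟩ = −|01⟩, U|02⟩ = −|20⟩, U|20⟩ = −|02⟩, U|12⟩ = −|21⟩, U|21⟩ = −|12⟩, U|00⟩ = |11⟩, U|11⟩ = |22⟩, U|22⟩ = |00⟩. Then the +1 eigenspace {v : U v = v} of U equals the four-dimensional subspace spanned by ψ₁ = |01⟩ − |10⟩, ψ₂ = |02⟩ − |20⟩, ψ₃ = |12⟩ − |21⟩, and ψ₄ = |00⟩ + |11⟩ + |22⟩. -/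
open Matrix

/-- The image basis label of the two-site AKLT stabilizer `U`:
`(0,1) ↔ (1,0)`, `(0,2) ↔ (2,0)`, `(1,2) ↔ (2,1)`, `(0,0) → (1,1) → (2,2) → (0,0)`. -/
def akltTarget : Fin 3 × Fin 3 → Fin 3 × Fin 3 := fun c =>
  if c = (0, 1) then (1, 0)
  else if c = (1, 0) then (0, 1)
  else if c = (0, 2) then (2, 0)
  else if c = (2, 0) then (0, 2)
  else if c = (1, 2) then (2, 1)
  else if c = (2, 1) then (1, 2)
  else if c = (0, 0) then (1, 1)
  else if c = (1, 1) then (2, 2)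
  else (0, 0)

/-- The sign of the two-site AKLT stabilizer `U`: `+1` on `(0,0), (1,1), (2,2)` and `−1`
on the six off-diagonal basis states. -/
def akltSign : Fin 3 × Fin 3 → ℂ := fun c =>
  if c = (0, 0) ∨ c = (1, 1) ∨ c = (2, 2) then 1 else -1

/-- The monomial unitary operator `U` on `ℂ³ ⊗ ℂ³` with `U|01⟩ = −|10⟩`, `U|10⟩ = −|01⟩`,
`U|02⟩ = −|20⟩`, `U|20⟩ = −|02⟩`, `U|12⟩ = −|21⟩`, `U|21⟩ = −|12⟩`, `U|00⟩ = |11⟩`,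
`U|11⟩ = |22⟩`, `U|22⟩ = |00⟩`. -/
def akltU : Matrix (Fin 3 × Fin 3) (Fin 3 × Fin 3) ℂ :=
  Matrix.of fun r c => if r = akltTarget c then akltSign c else 0

/-- The two-site basis state `|a b⟩`. -/
def ket (a b : Fin 3) : (Fin 3 × Fin 3) → ℂ := Pi.single (a, b) 1

/-- `ψ₁ = |01⟩ − |10⟩`. -/
noncomputable def akltPsi1 : (Fin 3 × Fin 3) → ℂ := ket 0 1 - ket 1 0
/-- `ψ₂ = |02⟩ − |20⟩`. -/
noncomputable def akltPsi2 : (Fin 3 × Fin 3) → ℂ := ket 0 2 - ket 2 0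
/-- `ψ₃ = |12⟩ − |21⟩`. -/
noncomputable def akltPsi3 : (Fin 3 × Fin 3) → ℂ := ket 1 2 - ket 2 1
/-- `ψ₄ = |00⟩ + |11⟩ + |22⟩`. -/
noncomputable def akltPsi4 : (Fin 3 × Fin 3) → ℂ := ket 0 0 + ket 1 1 + ket 2 2

/-!
Let a monomial operator send each basis vector `|c⟩` to a multiple of `|t c⟩`, with `t` injective.
For an eigenvector with regular eigenvalue, vanishing at one coordinate forces vanishing along the
whole `t`-orbit of that coordinate. Hence eigenvectors dual to a choice of orbit representatives
form a basis of the eigenspace. For the AKLT operator the orbits are the three pairs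
`{|ab⟩, |ba⟩}` with `a < b` and the cycle `|00⟩, |11⟩, |22⟩`, one for each of `ψ₁, ψ₂, ψ₃, ψ₄`.
-/

section DualFamily

variable {R M κ : Type*} [CommRing R] [AddCommGroup M] [Module R M] [Finite κ]

theorem span_range_eq_of_pairwise_dual_eq_zero_one {W : Submodule R M} {ψ : κ → M}
    (f : κ → Module.Dual R M) (hψ : ∀ k, ψ k ∈ W) (h0 : Pairwise fun k l ↦ f k (ψ l) = 0)
    (h1 : ∀ k, f k (ψ k) = 1) (hW : ∀ v ∈ W, (∀ k, f k v = 0) → v = 0) :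
    Submodule.span R (Set.range ψ) = W := by
  have := Fintype.ofFinite κ
  refine le_antisymm (Submodule.span_le.2 (Set.range_subset_iff.2 hψ)) fun v hv ↦ ?_
  have hres_mem : v - ∑ k, f k v • ψ k ∈ W :=
    W.sub_mem hv (W.sum_mem fun k _ ↦ W.smul_mem _ (hψ k))
  have hres_dual (l : κ) : f l (v - ∑ k, f k v • ψ k) = 0 := by
    have hsum : ∑ k, f k v * f l (ψ k) = f l v := by
      rw [Fintype.sum_eq_single l fun k hk ↦ by rw [h0 hk.symm, mul_zero], h1, mul_one]
    simp [hsum]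
  rw [sub_eq_zero.1 (hW _ hres_mem hres_dual)]
  exact Submodule.sum_mem _ fun k _ ↦
    Submodule.smul_mem _ _ (Submodule.subset_span (Set.mem_range_self k))

end DualFamily

section Monomial

variable {R n : Type*} [DecidableEq n]

/-- The monomial matrix of the operator sending the basis vector `|c⟩` to `s c • |t c⟩`. Arbitrary
`t` and `s` are allowed; it is a generalized permutation matrix when `t` is a bijection and the
values of `s` are nonzero. -/
def monomialMatrix [Zero R] (t : n → n) (s : n → R) : Matrix n n R :=
  Matrix.of fun r c ↦ if r = t c then s c else 0

variable [Fintype n]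

theorem monomialMatrix_mulVec_single_one [NonAssocSemiring R] (t : n → n) (s : n → R) (c : n) :
    monomialMatrix t s *ᵥ Pi.single c 1 = Pi.single (t c) (s c) := by
  ext r
  simp [monomialMatrix, Pi.single_apply]

theorem monomialMatrix_mulVec_apply [NonUnitalNonAssocSemiring R] {t : n → n}
    (ht : Function.Injective t) (s v : n → R) (c : n) :
    (monomialMatrix t s *ᵥ v) (t c) = s c * v c := by
  simp [monomialMatrix, Matrix.mulVec, dotProduct, ht.eq_iff]

variable {t : n → n} {s : n → R} {μ : R}

theorem apply_iterate_eq_zero_of_monomialMatrix_mulVec_eq_smul [NonUnitalNonAssocSemiring R]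
    (ht : Function.Injective t) (hμ : IsLeftRegular μ) {v : n → R}
    (hv : monomialMatrix t s *ᵥ v = μ • v) {c : n} (hc : v c = 0) (m : ℕ) : v (t^[m] c) = 0 := by
  have hstep : Set.MapsTo t {c | v c = 0} {c | v c = 0} := fun c (hc : v c = 0) ↦ by
    have h := congrFun hv (t c)
    rw [monomialMatrix_mulVec_apply ht, hc, mul_zero, Pi.smul_apply, smul_eq_mul] at h
    exact hμ.mul_left_eq_zero_iff.1 h.symm
  exact hstep.iterate m hc

theorem span_range_eq_eigenspace_monomialMatrix [CommRing R] {κ : Type*} [Finite κ]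
    (ht : Function.Injective t) (hμ : IsLeftRegular μ) {p : κ → n}
    (hp : ∀ c, ∃ k m, t^[m] (p k) = c) {ψ : κ → n → R}
    (hψ : ∀ k, monomialMatrix t s *ᵥ ψ k = μ • ψ k) (h0 : Pairwise fun k l ↦ ψ l (p k) = 0)
    (h1 : ∀ k, ψ k (p k) = 1) :
    Submodule.span R (Set.range ψ) =
      Module.End.eigenspace (Matrix.toLin' (monomialMatrix t s)) μ := by
  refine span_range_eq_of_pairwise_dual_eq_zero_one (fun k ↦ LinearMap.proj (p k))
    (fun k ↦ Module.End.mem_eigenspace_iff.2 (hψ k)) h0 h1 fun v hv hvp ↦ funext fun c ↦ ?_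
  obtain ⟨k, m, rfl⟩ := hp c
  exact apply_iterate_eq_zero_of_monomialMatrix_mulVec_eq_smul ht hμ
    (Module.End.mem_eigenspace_iff.1 hv) (hvp k) m

end Monomial

/-- The states `ψ₁, ψ₂, ψ₃, ψ₄` as a family, listed in the same order as the orbit representatives
`akltOrbitRep`. -/
noncomputable def akltPsi : Fin 4 → Fin 3 × Fin 3 → ℂ :=
  ![akltPsi1, akltPsi2, akltPsi3, akltPsi4]

/-- A representative of each orbit of `akltTarget`, chosen so that `akltPsi k` has coefficient `1`
there. -/
def akltOrbitRep : Fin 4 → Fin 3 × Fin 3 :=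
  ![(0, 1), (0, 2), (1, 2), (0, 0)]

theorem akltU_eq_monomialMatrix : akltU = monomialMatrix akltTarget akltSign :=
  rfl

theorem akltTarget_injective : Function.Injective akltTarget := by
  decide

theorem exists_iterate_akltTarget_akltOrbitRep_eq (c : Fin 3 × Fin 3) :
    ∃ k m, akltTarget^[m] (akltOrbitRep k) = c := by
  have hlen : ∀ c, ∃ k, ∃ m : Fin 3, akltTarget^[m] (akltOrbitRep k) = c := by decide
  obtain ⟨k, m, h⟩ := hlen c
  exact ⟨k, m, h⟩

theorem akltU_mulVec_ket_self (a : Fin 3) : akltU *ᵥ ket a a = ket (a + 1) (a + 1) := by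
  rw [akltU_eq_monomialMatrix, ket, monomialMatrix_mulVec_single_one]
  fin_cases a <;> simp [akltTarget, akltSign, ket]

theorem akltU_mulVec_ket_of_ne {a b : Fin 3} (h : a ≠ b) : akltU *ᵥ ket a b = -ket b a := by
  have htarget : akltTarget (a, b) = (b, a) := by decide +revert
  have hsign : akltSign (a, b) = -1 := if_neg (by decide +revert)
  rw [akltU_eq_monomialMatrix, ket, monomialMatrix_mulVec_single_one, htarget, hsign,
    Pi.single_neg, ket]

theorem akltU_mulVec_ket_sub_ket_swap {a b : Fin 3} (h : a ≠ b) :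
    akltU *ᵥ (ket a b - ket b a) = ket a b - ket b a := by
  rw [Matrix.mulVec_sub, akltU_mulVec_ket_of_ne h, akltU_mulVec_ket_of_ne h.symm, neg_sub_neg]

theorem akltU_mulVec_akltPsi4 : akltU *ᵥ akltPsi4 = akltPsi4 := by
  simp only [akltPsi4, Matrix.mulVec_add, akltU_mulVec_ket_self]
  change ket 1 1 + ket 2 2 + ket 0 0 = ket 0 0 + ket 1 1 + ket 2 2
  abel

theorem akltU_mulVec_akltPsi (k : Fin 4) : akltU *ᵥ akltPsi k = akltPsi k := by
  fin_cases k
  · exact akltU_mulVec_ket_sub_ket_swap (by decide)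
  · exact akltU_mulVec_ket_sub_ket_swap (by decide)
  · exact akltU_mulVec_ket_sub_ket_swap (by decide)
  · exact akltU_mulVec_akltPsi4

theorem akltPsi_akltOrbitRep (k l : Fin 4) :
    akltPsi l (akltOrbitRep k) = if k = l then 1 else 0 := by
  fin_cases k <;> fin_cases l <;>
    simp [akltPsi, akltOrbitRep, akltPsi1, akltPsi2, akltPsi3, akltPsi4, ket]

theorem pairwise_akltPsi_akltOrbitRep_eq_zero :
    Pairwise fun k l ↦ akltPsi l (akltOrbitRep k) = 0 :=
  fun k l hkl ↦ (akltPsi_akltOrbitRep k l).trans (if_neg hkl)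

theorem akltPsi_akltOrbitRep_self (k : Fin 4) : akltPsi k (akltOrbitRep k) = 1 :=
  (akltPsi_akltOrbitRep k k).trans (if_pos rfl)

theorem linearIndependent_akltPsi : LinearIndependent ℂ akltPsi :=
  .of_pairwise_dual_eq_zero_one _ (fun k ↦ LinearMap.proj (akltOrbitRep k))
    pairwise_akltPsi_akltOrbitRep_eq_zero akltPsi_akltOrbitRep_self

theorem span_range_akltPsi :
    Submodule.span ℂ (Set.range akltPsi) = Module.End.eigenspace (Matrix.toLin' akltU) 1 :=
  span_range_eq_eigenspace_monomialMatrix akltTarget_injective isRegular_one.left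
    exists_iterate_akltTarget_akltOrbitRep_eq
    (fun k ↦ (akltU_mulVec_akltPsi k).trans (one_smul ℂ _).symm)
    pairwise_akltPsi_akltOrbitRep_eq_zero akltPsi_akltOrbitRep_self

theorem range_akltPsi : Set.range akltPsi = {akltPsi1, akltPsi2, akltPsi3, akltPsi4} := by
  simp only [akltPsi, Matrix.range_cons, Matrix.range_empty, Set.union_empty, Set.singleton_union]

/-- **two-site AKLT stabilizer.** The `+1` eigenspace of `U` equals the
four-dimensional subspace spanned by `ψ₁ = |01⟩ − |10⟩`, `ψ₂ = |02⟩ − |20⟩`,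
`ψ₃ = |12⟩ − |21⟩` and `ψ₄ = |00⟩ + |11⟩ + |22⟩`. -/
theorem aklt_two_site_stabilizer :
    {v : Fin 3 × Fin 3 → ℂ | akltU.mulVec v = v} =
      (Submodule.span ℂ {akltPsi1, akltPsi2, akltPsi3, akltPsi4} :
        Set ((Fin 3 × Fin 3) → ℂ)) ∧
    Module.finrank ℂ
      (Submodule.span ℂ ({akltPsi1, akltPsi2, akltPsi3, akltPsi4} :
        Set ((Fin 3 × Fin 3) → ℂ))) = 4 := by
  rw [← range_akltPsi]
  constructor
  · ext v
    rw [span_range_akltPsi, SetLike.mem_coe, Module.End.mem_eigenspace_iff, Matrix.toLin'_apply,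
      one_smul, Set.mem_ofPred_eq]
  · rw [finrank_span_eq_card linearIndependent_akltPsi, Fintype.card_fin]
end
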